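/- The hypergraph on 34 vertices {1,...,9,A,...,Y} with the 9 hyperedges 12345678, 9ABC5678, DEFG3478, HIJKLMFG, NOPQRMEC, STUQRLDB, VWUPJK9A, XYWTOI28, XYVSNH17 (the second 34-9 set in dimension 8, nonisomorphic to the first) is a critical KS hypergraph: it admits no admissible {0,1}-assignment, and for every one of its 9 hyperedges, deleting that hyperedge yields a hypergraph that admits an admissible {0,1}-assignment. -/

import Mathlib

def ks349b : List (Finset ℕ) :=
  [{1, 2, 3, 4, 5, 6, 7, 8},
   {9, 10, 11, 12, 5, 6, 7, 8},
   {13, 14, 15, 16, 3, 4, 7, 8},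
   {17, 18, 19, 20, 21, 22, 15, 16},
   {23, 24, 25, 26, 27, 22, 14, 12},
   {28, 29, 30, 26, 27, 21, 13, 11},
   {31, 32, 30, 25, 19, 20, 9, 10},
   {33, 34, 32, 29, 24, 18, 2, 8},
   {33, 34, 31, 28, 23, 17, 1, 7}]

def admissible (E : List (Finset ℕ)) (f : ℕ → Bool) : Prop :=
  ∀ e ∈ E, (e.filter (fun v => f v = true)).card = 1

/-!
Every vertex has degree two or four in the hypergraph. The vertices assigned 1 by an admissible
assignment meet each hyperedge exactly once, so their degrees add up to the number of hyperedges,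
which is odd: a contradiction. After deleting one hyperedge, eight are left, and degrees no longer
obstruct: one finds, outside the deleted hyperedge, either four vertices of degree two or one of
degree four and two of degree two that meet each of these eight exactly once.
-/

/-- The degree of the vertex `v` in the hypergraph with hyperedges `E`: the number of hyperedges
containing `v`, counted with their multiplicity in the list. -/
def vertexDegree {α : Type*} [DecidableEq α] (E : List (Finset α)) (v : α) : ℕ :=
  E.countP (v ∈ ·)

theorem sum_vertexDegree {α : Type*} [DecidableEq α] (E : List (Finset α)) (s : Finset α) :
    ∑ v ∈ s, vertexDegree E v = (E.map fun e => (e ∩ s).card).sum := by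
  induction E with
  | nil => simp [vertexDegree]
  | cons e E ih =>
    have degree_cons (v : α) :
        vertexDegree (e :: E) v = vertexDegree E v + if v ∈ e then 1 else 0 := by
      simp [vertexDegree, List.countP_cons]
    simp only [degree_cons, Finset.sum_add_distrib, ih, ← Finset.card_filter,
      Finset.filter_mem_eq_inter, List.map_cons, List.sum_cons, Finset.inter_comm s e, add_comm]

theorem admissible.sum_vertexDegree_eq_length {E : List (Finset ℕ)} {f : ℕ → Bool}
    (hf : admissible E f) {V : Finset ℕ} (hV : ∀ e ∈ E, e ⊆ V) :
    ∑ v ∈ V with f v = true, vertexDegree E v = E.length := by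
  have card_inter : ∀ e ∈ E, (e ∩ V.filter (f · = true)).card = 1 := fun e he => by
    rw [Finset.inter_filter, Finset.inter_eq_left.mpr (hV e he), hf e he]
  rw [sum_vertexDegree, List.map_congr_left card_inter]
  simp

theorem admissible.dvd_length {E : List (Finset ℕ)} {f : ℕ → Bool} (hf : admissible E f)
    {V : Finset ℕ} (hV : ∀ e ∈ E, e ⊆ V) {d : ℕ} (hd : ∀ v ∈ V, d ∣ vertexDegree E v) :
    d ∣ E.length := by
  rw [← hf.sum_vertexDegree_eq_length hV]
  exact Finset.dvd_sum fun v hv => hd v (Finset.mem_of_mem_filter v hv)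

theorem ks349b_subset_vertices : ∀ e ∈ ks349b, e ⊆ Finset.Icc 1 34 := by
  decide

theorem two_dvd_vertexDegree_ks349b : ∀ v ∈ Finset.Icc 1 34, 2 ∣ vertexDegree ks349b v := by
  decide

/-- The vertices assigned 1 in an admissible assignment of `ks349b` with its `i`-th hyperedge
deleted, chosen outside the deleted hyperedge. -/
def ks349bDeletionTransversal : Fin ks349b.length → Finset ℕ :=
  ![{9, 13, 22, 33}, {1, 13, 22, 32}, {1, 11, 22, 32}, {8, 26, 31}, {8, 17, 30},
    {8, 19, 23}, {8, 22, 28}, {7, 22, 30}, {8, 22, 30}]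

theorem card_inter_ks349bDeletionTransversal (i j : Fin ks349b.length) :
    (ks349b.get j ∩ ks349bDeletionTransversal i).card = if j = i then 0 else 1 := by
  revert i j
  decide

theorem ks349b_critical_KS :
    (¬ ∃ f : ℕ → Bool, admissible ks349b f) ∧
    ∀ e ∈ ks349b, ∃ f : ℕ → Bool,
      ∀ e' ∈ ks349b, e' ≠ e → (e'.filter (fun v => f v = true)).card = 1 := by
  refine ⟨?_, fun e he => ?_⟩
  · rintro ⟨f, hf⟩
    have even_length : 2 ∣ ks349b.length :=
      hf.dvd_length ks349b_subset_vertices two_dvd_vertexDegree_ks349b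
    exact absurd even_length (by decide)
  · obtain ⟨i, rfl⟩ := List.mem_iff_get.mp he
    refine ⟨fun v => decide (v ∈ ks349bDeletionTransversal i), fun e' he' hne => ?_⟩
    obtain ⟨j, rfl⟩ := List.mem_iff_get.mp he'
    have hji : j ≠ i := fun h => hne (congrArg ks349b.get h)
    simp only [decide_eq_true_eq, Finset.filter_mem_eq_inter,
      card_inter_ks349bDeletionTransversal, if_neg hji]
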